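/- Let n ≥ 1, let V : ℝⁿ → ℝ and W : ℝ × ℝⁿ → ℝ be smooth with V, W and all their derivatives bounded, and let ψ : ℝ × ℝⁿ → ℂ be smooth such that for each t the functions ψ(t,·) and ∂ₜψ(t,·) are Schwartz, with Schwartz seminorms locally bounded in t, and ψ satisfies i∂ₜψ(t,x) = −Δψ(t,x) + V(x)ψ(t,x) + W(t,x)ψ(t,x) on ℝ × ℝⁿ. Then for every t > 0 the function t ↦ (1/t)‖(x−2pt)ψ(t)‖² + 4t ∫_{ℝⁿ}(V(x)+W(t,x))|ψ(t,x)|² dx is differentiable with derivative equal to −(1/t²)‖(x−2pt)ψ(t)‖² + 4∫_{ℝⁿ}(x·∇V(x) + V(x))|ψ(t,x)|² dx + 4∫_{ℝⁿ}(x·∇ₓW(t,x) + W(t,x))|ψ(t,x)|² dx + 4t∫_{ℝⁿ} ∂ₜW(t,x) |ψ(t,x)|² dx. -/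

import Mathlib

open MeasureTheory Complex

noncomputable section

/-- Partial derivative in the `i`-th coordinate direction. -/
def pd {n : ℕ} (f : EuclideanSpace ℝ (Fin n) → ℂ) (i : Fin n)
    (x : EuclideanSpace ℝ (Fin n)) : ℂ :=
  fderiv ℝ f x (EuclideanSpace.single i 1)

/-- The Laplacian `Δf = ∑ i ∂²f/∂xᵢ²`. -/
def lap {n : ℕ} (f : EuclideanSpace ℝ (Fin n) → ℂ)
    (x : EuclideanSpace ℝ (Fin n)) : ℂ :=
  ∑ i, pd (fun y => pd f i y) i x

/-- Squared norm of the gradient, `‖∇f(x)‖²_{ℂⁿ} = ∑ i ‖∂ᵢf(x)‖²`. -/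
def gradNormSq {n : ℕ} (f : EuclideanSpace ℝ (Fin n) → ℂ)
    (x : EuclideanSpace ℝ (Fin n)) : ℝ :=
  ∑ i, ‖pd f i x‖ ^ 2

/-- `x·∇V(x) = ∑ i xᵢ ∂V/∂xᵢ(x)` for a real-valued potential `V`. -/
def xdotGrad {n : ℕ} (V : EuclideanSpace ℝ (Fin n) → ℝ)
    (x : EuclideanSpace ℝ (Fin n)) : ℝ :=
  ∑ i, x i * fderiv ℝ V x (EuclideanSpace.single i 1)

/-- Time derivative `∂ₜψ(t,x)`. -/
def tderiv {n : ℕ} (ψ : ℝ → EuclideanSpace ℝ (Fin n) → ℂ) (t : ℝ)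
    (x : EuclideanSpace ℝ (Fin n)) : ℂ :=
  deriv (fun s => ψ s x) t

/-- `ψ(t,·)` is Schwartz for each `t`, with Schwartz seminorms locally bounded
in `t`: on each compact time interval all weighted derivative bounds are uniform. -/
def LocUnifSchwartz {n : ℕ} (ψ : ℝ → EuclideanSpace ℝ (Fin n) → ℂ) : Prop :=
  ∀ (k m : ℕ) (T : ℝ), ∃ C : ℝ, ∀ t ∈ Set.Icc (-T) T,
    ∀ x : EuclideanSpace ℝ (Fin n),
      ‖x‖ ^ k * ‖iteratedFDeriv ℝ m (ψ t) x‖ ≤ C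

/-- The conformal factor `‖(x−2pt)ψ(t)‖² = ∫_{ℝⁿ} ‖xψ(t,x) + 2it∇ₓψ(t,x)‖²_{ℂⁿ} dx`. -/
def conformalFactor {n : ℕ} (ψ : ℝ → EuclideanSpace ℝ (Fin n) → ℂ) (t : ℝ) : ℝ :=
  ∫ x : EuclideanSpace ℝ (Fin n),
    ∑ i, ‖(x i : ℂ) * ψ t x + 2 * Complex.I * (t : ℂ) * pd (ψ t) i x‖ ^ 2

/-!
With `U = V + W`, `M = ∫ |x|²|ψ|²`, `A = Re⟨iψ, x·∇ψ⟩`, `K = ∫ |∇ψ|²` and `P = ∫ U|ψ|²`, expanding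
the square gives `‖(x−2pt)ψ‖² = M − 4tA + 4t²K`, so the differentiated quantity is
`M/t − 4A + 4t(K + P)`. The equation yields `M' = 4A` and `(K + P)' = ∫ ∂ₜU|ψ|²`. The operator
`x·∇` satisfies `(x·∇)* = −x·∇ − n`, `[Δ, x·∇] = 2Δ` and `[x·∇, U] = x·∇U`, whence
`A' = 2K − ∫ (x·∇U)|ψ|²`. The product rule then gives the identity, the `K` and `A` terms
recombining with `M` into `−t⁻²‖(x−2pt)ψ‖²`.
-/

open Module Function SchwartzMap
open LineDeriv (lineDerivOp_add lineDerivOp_smul)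
open scoped SchwartzMap LineDeriv Laplacian InnerProductSpace

section Euler

variable {E F : Type*} [NormedAddCommGroup E] [NormedSpace ℝ E]
  [NormedAddCommGroup F] [NormedSpace ℝ F]

theorem hasTemperateGrowth_fderiv {u : E → F} (hu : u.HasTemperateGrowth) :
    (fderiv ℝ u).HasTemperateGrowth :=
  ⟨hu.1.fderiv_right (by simp), fun m => by
    simpa only [norm_iteratedFDeriv_fderiv] using hu.2 (m + 1)⟩

theorem hasTemperateGrowth_fderiv_apply {u : E → F} (hu : u.HasTemperateGrowth) (v : E) :
    (fun x => fderiv ℝ u x v).HasTemperateGrowth :=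
  ((ContinuousLinearMap.apply ℝ F v).hasTemperateGrowth).comp (hasTemperateGrowth_fderiv hu)

theorem hasTemperateGrowth_fderiv_apply_self {u : E → F} (hu : u.HasTemperateGrowth) :
    (fun x => fderiv ℝ u x x).HasTemperateGrowth :=
  (ContinuousLinearMap.id ℝ (E →L[ℝ] F)).bilinear_hasTemperateGrowth
    (hasTemperateGrowth_fderiv hu) .id'

/-- The Euler (dilation) operator `f ↦ x·∇f`. -/
def eulerOp : 𝓢(E, F) →L[ℝ] 𝓢(E, F) :=
  bilinLeftCLM (ContinuousLinearMap.id ℝ (E →L[ℝ] F)) HasTemperateGrowth.id' ∘L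
    fderivCLM ℝ E F

@[simp]
theorem eulerOp_apply (f : 𝓢(E, F)) (x : E) : eulerOp f x = fderiv ℝ f x x := rfl

theorem lineDerivOp_smulLeftCLM {u : E → ℝ} (hu : u.HasTemperateGrowth) (f : 𝓢(E, F)) (v : E) :
    ∂_{v} (smulLeftCLM F u f) =
      smulLeftCLM F (fun x => fderiv ℝ u x v) f +
        smulLeftCLM F u (∂_{v} f) := by
  ext x
  have hux : DifferentiableAt ℝ u x := hu.1.differentiable (by simp) x
  rw [lineDerivOp_apply_eq_fderiv, smulLeftCLM_apply hu,
    fderiv_fun_smul hux f.differentiableAt]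
  simp [hu, hasTemperateGrowth_fderiv_apply hu v, lineDerivOp_apply_eq_fderiv, add_comm]

theorem eulerOp_smulLeftCLM {u : E → ℝ} (hu : u.HasTemperateGrowth) (f : 𝓢(E, F)) :
    eulerOp (smulLeftCLM F u f) =
      smulLeftCLM F (fun x => fderiv ℝ u x x) f +
        smulLeftCLM F u (eulerOp f) := by
  ext x
  have h := DFunLike.congr_fun (lineDerivOp_smulLeftCLM hu f x) x
  simpa [hu, hasTemperateGrowth_fderiv_apply hu, hasTemperateGrowth_fderiv_apply_self hu,
    lineDerivOp_apply_eq_fderiv] using h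

theorem lineDerivOp_eulerOp (f : 𝓢(E, F)) (v : E) :
    ∂_{v} (eulerOp f) = eulerOp (∂_{v} f) + ∂_{v} f := by
  ext x
  have hf' : DifferentiableAt ℝ (fderiv ℝ f) x := (fderivCLM ℝ E F f).differentiableAt
  have hsymm : fderiv ℝ (fderiv ℝ f) x v x = fderiv ℝ (fderiv ℝ f) x x v :=
    (f.smooth 2).contDiffAt.isSymmSndFDerivAt (by simp) v x
  have hl : fderiv ℝ (eulerOp f) x v = fderiv ℝ (fderiv ℝ f) x v x + fderiv ℝ f x v := by
    have h := (hf'.hasFDerivAt.clm_apply (hasFDerivAt_id x)).fderiv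
    exact (DFunLike.congr_fun h v).trans (by simp [add_comm])
  have hr : fderiv ℝ (∂_{v} f : 𝓢(E, F)) x x = fderiv ℝ (fderiv ℝ f) x x v := by
    have h := (hf'.hasFDerivAt.clm_apply (hasFDerivAt_const v x)).fderiv
    exact (DFunLike.congr_fun h x).trans (by simp)
  simp [lineDerivOp_apply_eq_fderiv, hl, hr, hsymm]

end Euler

section Coordinates

variable {ι E F : Type*} [Fintype ι] [NormedAddCommGroup E] [InnerProductSpace ℝ E]
  [NormedAddCommGroup F] [NormedSpace ℝ F]

theorem lineDerivOp_normSq_smul (f : 𝓢(E, F)) (v : E) :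
    ∂_{v} (smulLeftCLM F (fun x => ‖x‖ ^ 2) f) =
      (2 : ℝ) • smulLeftCLM F (fun x => ⟪v, x⟫_ℝ) f
        + smulLeftCLM F (fun x => ‖x‖ ^ 2) (∂_{v} f) := by
  have hderiv : (fun x => fderiv ℝ (fun y : E => ‖y‖ ^ 2) x v) = (2 : ℝ) • fun x => ⟪v, x⟫_ℝ := by
    ext x
    simp [fderiv_norm_sq_apply, real_inner_comm]
  rw [lineDerivOp_smulLeftCLM (hasTemperateGrowth_norm_sq E), hderiv,
    smulLeftCLM_smul (hasTemperateGrowth_inner_right v)]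
  rfl

theorem eulerOp_eq_sum (b : OrthonormalBasis ι ℝ E) (f : 𝓢(E, F)) :
    eulerOp f = ∑ i, smulLeftCLM F (fun x => ⟪b i, x⟫_ℝ) (∂_{b i} f) := by
  ext x
  calc fderiv ℝ f x x = fderiv ℝ f x (∑ i, ⟪b i, x⟫_ℝ • b i) := by rw [b.sum_repr']
    _ = _ := by
      simp [hasTemperateGrowth_inner_right, lineDerivOp_apply_eq_fderiv]

theorem laplacian_eulerOp [FiniteDimensional ℝ E] (f : 𝓢(E, F)) :
    Δ (eulerOp f) = eulerOp (Δ f) + (2 : ℝ) • Δ f := by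
  simp only [laplacian_eq_sum (stdOrthonormalBasis ℝ E), lineDerivOp_eulerOp,
    lineDerivOp_add, map_sum, Finset.sum_add_distrib, two_smul, add_assoc]

end Coordinates

section L2

variable {ι E F : Type*} [Fintype ι] [NormedAddCommGroup E] [InnerProductSpace ℝ E]
  [FiniteDimensional ℝ E] [MeasurableSpace E] [BorelSpace E]
  [NormedAddCommGroup F] [InnerProductSpace ℝ F]

/-- The real `L²` inner product of Schwartz functions, as a bilinear form. -/
def l2Inner : 𝓢(E, F) →ₗ[ℝ] 𝓢(E, F) →ₗ[ℝ] ℝ :=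
  LinearMap.mk₂ ℝ
    (fun f g => integralCLM ℝ volume (pairing (innerSL ℝ) f g))
    (fun _ _ _ => by simp only [map_add, add_apply])
    (fun _ _ _ => by simp only [map_smul, smul_apply])
    (fun _ _ _ => by rw [map_add, map_add])
    (fun _ _ _ => by rw [map_smul, map_smul])

theorem l2Inner_apply (f g : 𝓢(E, F)) : l2Inner f g = ∫ x, ⟪f x, g x⟫_ℝ := rfl

theorem l2Inner_self (f : 𝓢(E, F)) : l2Inner f f = ∫ x, ‖f x‖ ^ 2 := by
  simp_rw [l2Inner_apply, real_inner_self_eq_norm_sq]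

theorem l2Inner_comm (f g : 𝓢(E, F)) : l2Inner f g = l2Inner g f := by
  simp_rw [l2Inner_apply, real_inner_comm]

theorem l2Inner_lineDerivOp (f g : 𝓢(E, F)) (v : E) :
    l2Inner f (∂_{v} g) = -l2Inner (∂_{v} f) g :=
  integral_bilinear_lineDerivOp_right_eq_neg_left f g (innerSL ℝ) v

theorem l2Inner_laplacian (f g : 𝓢(E, F)) : l2Inner f (Δ g) = l2Inner (Δ f) g :=
  integral_bilinear_laplacian_right_eq_left f g (innerSL ℝ)

theorem l2Inner_smulLeftCLM {u : E → ℝ} (hu : u.HasTemperateGrowth) (f g : 𝓢(E, F)) :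
    l2Inner f (smulLeftCLM F u g) = l2Inner (smulLeftCLM F u f) g := by
  simp_rw [l2Inner_apply, smulLeftCLM_apply_apply hu, real_inner_smul_left,
    real_inner_smul_right]

theorem l2Inner_smulLeftCLM_self {u : E → ℝ} (hu : u.HasTemperateGrowth) (f : 𝓢(E, F)) :
    l2Inner (smulLeftCLM F u f) f = ∫ x, u x * ‖f x‖ ^ 2 := by
  simp_rw [l2Inner_apply, smulLeftCLM_apply_apply hu, real_inner_smul_left,
    real_inner_self_eq_norm_sq]

theorem integrable_mul_norm_sq {u : E → ℝ} (hu : u.HasTemperateGrowth) (f : 𝓢(E, F)) :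
    Integrable fun x => u x * ‖f x‖ ^ 2 := by
  refine (pairing (innerSL ℝ) (smulLeftCLM F u f) f).integrable.congr (.of_forall fun x => ?_)
  rw [pairing_apply_apply, smulLeftCLM_apply_apply hu, innerSL_apply_apply, real_inner_smul_left,
    real_inner_self_eq_norm_sq]

theorem l2Inner_laplacian_eq_neg_sum (b : OrthonormalBasis ι ℝ E) (f g : 𝓢(E, F)) :
    l2Inner f (Δ g) = -∑ i, l2Inner (∂_{b i} f) (∂_{b i} g) := by
  simp_rw [laplacian_eq_sum b, map_sum, l2Inner_lineDerivOp, Finset.sum_neg_distrib]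

theorem l2Inner_eulerOp (f g : 𝓢(E, F)) :
    l2Inner f (eulerOp g) = -l2Inner (eulerOp f) g - finrank ℝ E * l2Inner f g := by
  let b := stdOrthonormalBasis ℝ E
  have hterm (i) : l2Inner f (smulLeftCLM F (fun x => ⟪b i, x⟫_ℝ) (∂_{b i} g)) =
      -l2Inner (smulLeftCLM F (fun x => ⟪b i, x⟫_ℝ) (∂_{b i} f)) g - l2Inner f g := by
    have hcoord : (fun x => ⟪b i, x⟫_ℝ).HasTemperateGrowth := hasTemperateGrowth_inner_right (b i)
    have hone : (fun x => fderiv ℝ (fun y => ⟪b i, y⟫_ℝ) x (b i)) = fun _ => (1 : ℝ) := by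
      ext x
      have h : fderiv ℝ (fun y => ⟪b i, y⟫_ℝ) x = innerSL ℝ (b i) := (innerSL ℝ (b i)).fderiv
      simp [h]
    rw [l2Inner_smulLeftCLM hcoord, l2Inner_lineDerivOp, lineDerivOp_smulLeftCLM hcoord, hone,
      smulLeftCLM_const, one_smul, ContinuousLinearMap.id_apply, map_add, LinearMap.add_apply]
    ring
  simp_rw [eulerOp_eq_sum b, map_sum, hterm]
  simp [Finset.sum_sub_distrib]

theorem two_mul_l2Inner_eulerOp_laplacian (f : 𝓢(E, F)) :
    2 * l2Inner (eulerOp f) (Δ f) = (2 - finrank ℝ E) * l2Inner f (Δ f) := by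
  have h : l2Inner (eulerOp f) (Δ f) =
      -l2Inner (eulerOp f) (Δ f) - finrank ℝ E * l2Inner f (Δ f) + 2 * l2Inner f (Δ f) := by
    conv_lhs => rw [l2Inner_laplacian, l2Inner_comm, laplacian_eulerOp, map_add, map_smul,
      smul_eq_mul, l2Inner_eulerOp]
  linear_combination h

theorem two_mul_l2Inner_eulerOp_smulLeftCLM {u : E → ℝ} (hu : u.HasTemperateGrowth) (f : 𝓢(E, F)) :
    2 * l2Inner (eulerOp f) (smulLeftCLM F u f) =
      -l2Inner (smulLeftCLM F (fun x => fderiv ℝ u x x) f) f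
        - finrank ℝ E * l2Inner (smulLeftCLM F u f) f := by
  have h := l2Inner_eulerOp (smulLeftCLM F u f) f
  rw [eulerOp_smulLeftCLM hu, map_add, LinearMap.add_apply,
    ← l2Inner_smulLeftCLM hu (eulerOp f), l2Inner_comm (smulLeftCLM F u f) (eulerOp f)] at h
  linear_combination h

end L2

section ComplexValued

variable {E : Type*} [NormedAddCommGroup E] [NormedSpace ℝ E]

theorem eulerOp_I_smul (f : 𝓢(E, ℂ)) : eulerOp (I • f) = I • eulerOp f := by
  ext x
  exact DFunLike.congr_fun (fderiv_const_smul f.differentiableAt I) x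

theorem smulLeftCLM_I_smul {u : E → ℝ} (hu : u.HasTemperateGrowth) (f : 𝓢(E, ℂ)) :
    smulLeftCLM ℂ u (I • f) = I • smulLeftCLM ℂ u f := by
  ext x
  simp [hu, mul_left_comm]

end ComplexValued

section Schrodinger

variable {E : Type*} [NormedAddCommGroup E] [InnerProductSpace ℝ E] [FiniteDimensional ℝ E]
  [MeasurableSpace E] [BorelSpace E]

theorem l2Inner_I_smul_left (f g : 𝓢(E, ℂ)) : l2Inner (I • f) g = -l2Inner f (I • g) := by
  simp_rw [l2Inner_apply, ← integral_neg, Complex.inner]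
  congr with x
  simp only [smul_apply, smul_eq_mul, map_mul, conj_I, mul_re, mul_im, neg_re, neg_im, I_re, I_im,
    conj_re, conj_im]
  ring

theorem l2Inner_I_smul_self (f : 𝓢(E, ℂ)) : l2Inner (I • f) f = 0 := by
  linarith [l2Inner_I_smul_left f f, l2Inner_comm f (I • f)]

theorem l2Inner_smulLeftCLM_I_smul_self {u : E → ℝ} (hu : u.HasTemperateGrowth) (f : 𝓢(E, ℂ)) :
    l2Inner (smulLeftCLM ℂ u (I • f)) f = 0 := by
  refine self_eq_neg.mp ?_
  calc l2Inner (smulLeftCLM ℂ u (I • f)) f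
      = -l2Inner (smulLeftCLM ℂ u f) (I • f) := by
        rw [smulLeftCLM_I_smul hu, l2Inner_I_smul_left]
    _ = -l2Inner (smulLeftCLM ℂ u (I • f)) f := by
        rw [← l2Inner_smulLeftCLM hu, l2Inner_comm]

theorem l2Inner_normSq_laplacian (f : 𝓢(E, ℂ)) :
    l2Inner (smulLeftCLM ℂ (fun x => ‖x‖ ^ 2) (I • f)) (Δ f) =
      -2 * l2Inner (I • f) (eulerOp f) := by
  have hsq := hasTemperateGrowth_norm_sq E
  let b := stdOrthonormalBasis ℝ E
  rw [l2Inner_laplacian_eq_neg_sum b, eulerOp_eq_sum b, map_sum, Finset.mul_sum,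
    ← Finset.sum_neg_distrib]
  refine Finset.sum_congr rfl fun i _ => ?_
  rw [lineDerivOp_normSq_smul, lineDerivOp_smul, map_add, LinearMap.add_apply,
    l2Inner_smulLeftCLM_I_smul_self hsq, map_smul, LinearMap.smul_apply, smul_eq_mul,
    ← l2Inner_smulLeftCLM (hasTemperateGrowth_inner_right (b i))]
  ring

variable {u : E → ℝ} {φ χ : 𝓢(E, ℂ)}

theorem variance_identity (hu : u.HasTemperateGrowth)
    (h : I • χ = -Δ φ + smulLeftCLM ℂ u φ) :
    l2Inner (smulLeftCLM ℂ (fun x => ‖x‖ ^ 2) φ) χ = 2 * l2Inner (I • φ) (eulerOp φ) := by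
  have hsq := hasTemperateGrowth_norm_sq E
  have hpot : l2Inner (smulLeftCLM ℂ (fun x => ‖x‖ ^ 2) (I • φ)) (smulLeftCLM ℂ u φ) = 0 := by
    rw [l2Inner_smulLeftCLM hu, smulLeftCLM_smulLeftCLM_apply hu hsq,
      l2Inner_smulLeftCLM_I_smul_self (hu.mul hsq)]
  calc l2Inner (smulLeftCLM ℂ (fun x => ‖x‖ ^ 2) φ) χ
      = l2Inner (smulLeftCLM ℂ (fun x => ‖x‖ ^ 2) (I • φ)) (I • χ) := by
        rw [smulLeftCLM_I_smul hsq, l2Inner_I_smul_left, smul_smul]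
        simp
    _ = 2 * l2Inner (I • φ) (eulerOp φ) := by
        rw [h, map_add, map_neg, l2Inner_normSq_laplacian, hpot]
        ring

theorem virial_identity (hu : u.HasTemperateGrowth)
    (h : I • χ = -Δ φ + smulLeftCLM ℂ u φ) :
    l2Inner (I • χ) (eulerOp φ) + l2Inner (I • φ) (eulerOp χ) =
      -2 * l2Inner φ (Δ φ) - l2Inner (smulLeftCLM ℂ (fun x => fderiv ℝ u x x) φ) φ := by
  have hχ : l2Inner (I • φ) (eulerOp χ) =
      l2Inner (eulerOp φ) (I • χ) + finrank ℝ E * l2Inner φ (I • χ) := by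
    rw [l2Inner_eulerOp, eulerOp_I_smul, l2Inner_I_smul_left, l2Inner_I_smul_left]
    ring
  have hkin := two_mul_l2Inner_eulerOp_laplacian φ
  have hpot := two_mul_l2Inner_eulerOp_smulLeftCLM hu φ
  rw [hχ, l2Inner_comm (I • χ), h]
  simp only [map_add, map_neg]
  rw [l2Inner_comm φ (smulLeftCLM ℂ u φ)]
  linear_combination hpot - hkin

theorem energy_identity (h : I • χ = -Δ φ + smulLeftCLM ℂ u φ) :
    l2Inner χ (-Δ φ) + l2Inner χ (smulLeftCLM ℂ u φ) = 0 := by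
  rw [← map_add, ← h, l2Inner_comm, l2Inner_I_smul_self]

end Schrodinger

section MixedPartials

variable {E F : Type*} [NormedAddCommGroup E] [NormedSpace ℝ E] [NormedAddCommGroup F]
  [NormedSpace ℝ F] {f : ℝ → E → F}

theorem hasDerivAt_slice (hf : Differentiable ℝ (fun p : ℝ × E => f p.1 p.2)) (t : ℝ) (x : E) :
    HasDerivAt (f · x) (fderiv ℝ (fun p : ℝ × E => f p.1 p.2) (t, x) (1, 0)) t :=
  (hf (t, x)).hasFDerivAt.comp_hasDerivAt (f := fun s => (s, x)) t
    ((hasDerivAt_id t).prodMk (hasDerivAt_const t x))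

theorem hasDerivAt_fderiv_slice (hf : ContDiff ℝ 2 (fun p : ℝ × E => f p.1 p.2)) (t : ℝ) (x : E) :
    HasDerivAt (fun s => fderiv ℝ (f s) x) (fderiv ℝ (fun y => deriv (f · y) t) x) t := by
  let g : ℝ × E → F := fun p => f p.1 p.2
  have hg : Differentiable ℝ g := hf.differentiable (by simp)
  have hg' : Differentiable ℝ (fderiv ℝ g) :=
    (hf.fderiv_right (m := 1) (by norm_num)).differentiable (by simp)
  have hspace (s : ℝ) (y : E) : fderiv ℝ (f s) y = fderiv ℝ g (s, y) ∘L .inr ℝ ℝ E :=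
    ((hg (s, y)).hasFDerivAt.comp y (hasFDerivAt_prodMk_right s y)).fderiv
  have htime (s : ℝ) (y : E) : deriv (f · y) s = fderiv ℝ g (s, y) (1, 0) :=
    (hasDerivAt_slice hg s y).deriv
  have hleft : HasDerivAt (fun s => fderiv ℝ g (s, x) ∘L .inr ℝ ℝ E)
      (fderiv ℝ (fderiv ℝ g) (t, x) (1, 0) ∘L .inr ℝ ℝ E) t := by
    have h := (hg' (t, x)).hasFDerivAt.comp_hasDerivAt t
      ((hasDerivAt_id t).prodMk (hasDerivAt_const t x))
    exact ((ContinuousLinearMap.compL ℝ E (ℝ × E) F).flip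
      (.inr ℝ ℝ E)).hasFDerivAt.comp_hasDerivAt t h
  have hright : HasFDerivAt (fun y => fderiv ℝ g (t, y) (1, 0))
      (fderiv ℝ (fderiv ℝ g) (t, x) (1, 0) ∘L .inr ℝ ℝ E) x := by
    have h := (hg' (t, x)).hasFDerivAt.comp x (hasFDerivAt_prodMk_right t x)
    refine (h.clm_apply (hasFDerivAt_const ((1 : ℝ), (0 : E)) x)).congr_fderiv ?_
    ext v
    simpa using (hf.contDiffAt.isSymmSndFDerivAt (by simp)).eq (0, v) (1, 0)
  simpa only [hspace, htime, hright.fderiv] using hleft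

theorem contDiff_deriv_slice {m : WithTop ℕ∞}
    (hf : ContDiff ℝ (m + 1) (fun p : ℝ × E => f p.1 p.2)) (t : ℝ) :
    ContDiff ℝ m fun x => deriv (f · x) t := by
  simp only [(hasDerivAt_slice (hf.differentiable (by simp)) _ _).deriv]
  exact ((hf.fderiv_right le_rfl).comp (contDiff_prodMk_right t)).clm_apply contDiff_const

end MixedPartials

section TimeDerivative

variable {E F G H : Type*} [NormedAddCommGroup E] [NormedAddCommGroup F] [NormedSpace ℝ F]
  [NormedAddCommGroup G] [NormedSpace ℝ G] [NormedAddCommGroup H] [NormedSpace ℝ H]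
  {k l : ℤ}

/-- The slices `f t` are continuous and `O((1 + ‖x‖) ^ k)`, locally uniformly in `t`. -/
structure LocUnifGrowth (k : ℤ) (f : ℝ → E → F) : Prop where
  continuous (t : ℝ) : Continuous (f t)
  bound (T : ℝ) : ∃ C, ∀ t ∈ Set.Icc (-T) T, ∀ x, ‖f t x‖ ≤ C * (1 + ‖x‖) ^ k

namespace LocUnifGrowth

omit [NormedSpace ℝ F] in
theorem add {f g : ℝ → E → F} (hf : LocUnifGrowth k f) (hg : LocUnifGrowth k g) :
    LocUnifGrowth k fun t x => f t x + g t x where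
  continuous t := (hf.continuous t).add (hg.continuous t)
  bound T := by
    obtain ⟨C, hC⟩ := hf.bound T
    obtain ⟨D, hD⟩ := hg.bound T
    refine ⟨C + D, fun t ht x => ?_⟩
    rw [add_mul]
    exact norm_add_le_of_le (hC t ht x) (hD t ht x)

theorem bilin (B : F →L[ℝ] G →L[ℝ] H) {f : ℝ → E → F} {g : ℝ → E → G}
    (hf : LocUnifGrowth k f) (hg : LocUnifGrowth l g) :
    LocUnifGrowth (k + l) fun t x => B (f t x) (g t x) where
  continuous t := B.continuous₂.comp₂ (hf.continuous t) (hg.continuous t)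
  bound T := by
    obtain ⟨C, hC⟩ := hf.bound T
    obtain ⟨D, hD⟩ := hg.bound T
    refine ⟨‖B‖ * C * D, fun t ht x => ?_⟩
    calc ‖B (f t x) (g t x)‖
        ≤ ‖B‖ * (C * (1 + ‖x‖) ^ k) * (D * (1 + ‖x‖) ^ l) :=
          B.le_of_opNorm₂_le_of_le le_rfl (hC t ht x) (hD t ht x)
      _ = ‖B‖ * C * D * (1 + ‖x‖) ^ (k + l) := by
          rw [zpow_add₀ (by positivity)]
          ring

omit [NormedSpace ℝ F] in
theorem mono {f : ℝ → E → F} (hf : LocUnifGrowth k f) (hkl : k ≤ l) : LocUnifGrowth l f where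
  continuous := hf.continuous
  bound T := by
    obtain ⟨C, hC⟩ := hf.bound T
    refine ⟨|C|, fun t ht x => (hC t ht x).trans ?_⟩
    gcongr
    exacts [le_abs_self C, le_add_of_nonneg_right (norm_nonneg x)]

omit [NormedSpace ℝ F] in
theorem of_pow_mul_le {f : ℝ → E → F} (hcont : ∀ t, Continuous (f t))
    (hdecay : ∀ (m : ℕ) (T : ℝ), ∃ C, ∀ t ∈ Set.Icc (-T) T, ∀ x, ‖x‖ ^ m * ‖f t x‖ ≤ C) (k : ℤ) :
    LocUnifGrowth k f where
  continuous := hcont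
  bound T := by
    obtain ⟨C, hC⟩ := hdecay 0 T
    obtain ⟨D, hD⟩ := hdecay k.natAbs T
    refine ⟨2 ^ (k.natAbs - 1) * (C + D), fun t ht x => ?_⟩
    have hx : 1 ≤ 1 + ‖x‖ := le_add_of_nonneg_right (norm_nonneg x)
    have hdecay' : (1 + ‖x‖) ^ k.natAbs * ‖f t x‖ ≤ 2 ^ (k.natAbs - 1) * (C + D) :=
      calc (1 + ‖x‖) ^ k.natAbs * ‖f t x‖
          ≤ 2 ^ (k.natAbs - 1) * (1 ^ k.natAbs + ‖x‖ ^ k.natAbs) * ‖f t x‖ := by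
            gcongr
            exact add_pow_le zero_le_one (norm_nonneg x) _
        _ = 2 ^ (k.natAbs - 1) * (‖x‖ ^ 0 * ‖f t x‖ + ‖x‖ ^ k.natAbs * ‖f t x‖) := by ring
        _ ≤ 2 ^ (k.natAbs - 1) * (C + D) := by
            gcongr
            exacts [hC t ht x, hD t ht x]
    have hweight : 1 ≤ (1 + ‖x‖) ^ k.natAbs * (1 + ‖x‖) ^ k := by
      rw [← zpow_natCast, ← zpow_add₀ (by positivity)]
      exact one_le_zpow₀ hx (by omega)
    calc ‖f t x‖ ≤ ‖f t x‖ * ((1 + ‖x‖) ^ k.natAbs * (1 + ‖x‖) ^ k) :=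
          le_mul_of_one_le_right (norm_nonneg _) hweight
      _ = (1 + ‖x‖) ^ k.natAbs * ‖f t x‖ * (1 + ‖x‖) ^ k := by ring
      _ ≤ 2 ^ (k.natAbs - 1) * (C + D) * (1 + ‖x‖) ^ k := by gcongr

end LocUnifGrowth

/-- `f'` is the pointwise time derivative of `f`, and both have locally uniform growth of order
`k` in space. -/
structure HasTimeDerivOfOrder (k : ℤ) (f f' : ℝ → E → F) : Prop where
  hasDerivAt (t : ℝ) (x : E) : HasDerivAt (f · x) (f' t x) t
  growth : LocUnifGrowth k f
  growth_deriv : LocUnifGrowth k f'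

namespace HasTimeDerivOfOrder

theorem bilin (B : F →L[ℝ] G →L[ℝ] H) {f f' : ℝ → E → F} {g g' : ℝ → E → G}
    (hf : HasTimeDerivOfOrder k f f') (hg : HasTimeDerivOfOrder l g g') :
    HasTimeDerivOfOrder (k + l) (fun t x => B (f t x) (g t x))
      (fun t x => B (f t x) (g' t x) + B (f' t x) (g t x)) where
  hasDerivAt t x :=
    B.hasDerivAt_of_bilinear (fun _ => hf.hasDerivAt t x) (fun _ => hg.hasDerivAt t x)
  growth := hf.growth.bilin B hg.growth
  growth_deriv := (hf.growth.bilin B hg.growth_deriv).add (hf.growth_deriv.bilin B hg.growth)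

theorem of_static {g : E → F} (hg : Continuous g) {C : ℝ} (hC : ∀ x, ‖g x‖ ≤ C * (1 + ‖x‖) ^ k) :
    HasTimeDerivOfOrder k (fun _ => g) (fun _ _ => 0) where
  hasDerivAt _ x := hasDerivAt_const _ (g x)
  growth := ⟨fun _ => hg, fun _ => ⟨C, fun _ _ => hC⟩⟩
  growth_deriv := ⟨fun _ => continuous_const, fun _ => ⟨0, by simp⟩⟩

theorem hasDerivAt_integral [NormedSpace ℝ E] [FiniteDimensional ℝ E] [MeasurableSpace E]
    [BorelSpace E] (μ : Measure E) [μ.IsAddHaarMeasure] {f f' : ℝ → E → F}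
    (hf : HasTimeDerivOfOrder k f f') (hk : k < -(finrank ℝ E : ℤ)) (t : ℝ) :
    HasDerivAt (fun s => ∫ x, f s x ∂μ) (∫ x, f' t x ∂μ) t := by
  have hweight (C : ℝ) : Integrable (fun x : E => C * (1 + ‖x‖) ^ k) μ := by
    have h := integrable_one_add_norm (E := E) (μ := μ) (r := -k) (by exact_mod_cast (by omega))
    simpa only [neg_neg, Real.rpow_intCast] using h.const_mul C
  have mem_Icc {s : ℝ} (hs : s ∈ Metric.ball t 1) : s ∈ Set.Icc (-(|t| + 1)) (|t| + 1) := by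
    rw [Metric.mem_ball, Real.dist_eq] at hs
    exact abs_le.mp (by linarith [abs_sub_abs_le_abs_sub s t])
  obtain ⟨C, hC⟩ := hf.growth.bound (|t| + 1)
  obtain ⟨D, hD⟩ := hf.growth_deriv.bound (|t| + 1)
  have hint : Integrable (f t) μ := (hweight C).mono' (hf.growth.continuous t).aestronglyMeasurable
    (.of_forall (hC t (mem_Icc (Metric.mem_ball_self one_pos))))
  exact (hasDerivAt_integral_of_dominated_loc_of_deriv_le (Metric.ball_mem_nhds t one_pos)
    (.of_forall fun s => (hf.growth.continuous s).aestronglyMeasurable) hint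
    (hf.growth_deriv.continuous t).aestronglyMeasurable
    (.of_forall fun x s hs => hD s (mem_Icc hs) x) (hweight D)
    (.of_forall fun x s _ => hf.hasDerivAt s x)).2

end HasTimeDerivOfOrder

end TimeDerivative

section SchwartzCurves

variable {E F : Type*} [NormedAddCommGroup E] [NormedSpace ℝ E]
  [NormedAddCommGroup F] [NormedSpace ℝ F]

/-- The curve of Schwartz functions `φ` has pointwise time derivative `φ'`, and both decay
rapidly in space, locally uniformly in time. -/
def HasRapidTimeDeriv (φ φ' : ℝ → 𝓢(E, F)) : Prop :=
  ∀ k : ℤ, HasTimeDerivOfOrder k (fun t => ⇑(φ t)) (fun t => ⇑(φ' t))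

/-- The time-dependent multiplier `U` has pointwise time derivative `U'`, and both have temperate
growth in space, the order of growth being locally uniform in time. -/
structure HasTemperateTimeDeriv (U U' : ℝ → E → ℝ) : Prop where
  temperate (t : ℝ) : (U t).HasTemperateGrowth
  temperate_deriv (t : ℝ) : (U' t).HasTemperateGrowth
  exists_order : ∃ k : ℤ, HasTimeDerivOfOrder k U U'

theorem exists_hasTimeDerivOfOrder_static {u : E → F} (hu : u.HasTemperateGrowth) :
    ∃ k : ℤ, HasTimeDerivOfOrder k (fun _ => u) (fun _ _ => 0) := by
  obtain ⟨k, C, hC⟩ := hu.2 0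
  exact ⟨k, .of_static hu.1.continuous (C := C) fun x => by simpa using hC x⟩

theorem HasTemperateTimeDeriv.static {u : E → ℝ} (hu : u.HasTemperateGrowth) :
    HasTemperateTimeDeriv (fun _ => u) (fun _ _ => 0) :=
  ⟨fun _ => hu, fun _ => .const 0, exists_hasTimeDerivOfOrder_static hu⟩

theorem exists_locUnifGrowth_of_uncurry {g : ℝ × E → F} (hg : g.HasTemperateGrowth) :
    ∃ k : ℤ, LocUnifGrowth k fun t x => g (t, x) := by
  obtain ⟨k, C, hC⟩ := hg.2 0
  refine ⟨k, fun t => hg.1.continuous.comp (.prodMk_right t), fun T => ⟨|C| * (1 + T) ^ k, ?_⟩⟩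
  intro t ht x
  have hT : |t| ≤ T := abs_le.mpr ht
  have hnorm : 1 + ‖(t, x)‖ ≤ (1 + T) * (1 + ‖x‖) := by
    have hmax : ‖(t, x)‖ ≤ |t| + ‖x‖ := max_le_add_of_nonneg (abs_nonneg t) (norm_nonneg x)
    nlinarith [mul_nonneg ((abs_nonneg t).trans hT) (norm_nonneg x)]
  calc ‖g (t, x)‖ ≤ C * (1 + ‖(t, x)‖) ^ k := by simpa using hC (t, x)
    _ ≤ |C| * ((1 + T) * (1 + ‖x‖)) ^ k := by
        gcongr
        exact le_abs_self C
    _ = |C| * (1 + T) ^ k * (1 + ‖x‖) ^ (k : ℤ) := by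
        rw [mul_pow, zpow_natCast]
        ring

theorem hasTemperateGrowth_slice {g : ℝ × E → F} (hg : g.HasTemperateGrowth) (t : ℝ) :
    (fun x => g (t, x)).HasTemperateGrowth := by
  have hslice :
      (fun x : E => ((t, 0) : ℝ × E) + ContinuousLinearMap.inr ℝ ℝ E x).HasTemperateGrowth :=
    (HasTemperateGrowth.const _).add (ContinuousLinearMap.hasTemperateGrowth _)
  simpa [Function.comp_def] using hg.comp hslice

theorem HasTemperateTimeDeriv.of_uncurry {U : ℝ → E → ℝ}
    (hU : (fun p : ℝ × E => U p.1 p.2).HasTemperateGrowth) :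
    HasTemperateTimeDeriv U fun t x => deriv (U · x) t := by
  have hderiv := hasDerivAt_slice (hU.1.differentiable (by simp))
  have hU' := hasTemperateGrowth_fderiv_apply hU (1, 0)
  obtain ⟨k, hk⟩ := exists_locUnifGrowth_of_uncurry hU
  obtain ⟨l, hl⟩ := exists_locUnifGrowth_of_uncurry hU'
  simp only [(hderiv _ _).deriv]
  exact ⟨hasTemperateGrowth_slice hU, hasTemperateGrowth_slice hU',
    max k l, hderiv, hk.mono (le_max_left k l), hl.mono (le_max_right k l)⟩

theorem HasTemperateTimeDeriv.add {U U' V V' : ℝ → E → ℝ} (hU : HasTemperateTimeDeriv U U')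
    (hV : HasTemperateTimeDeriv V V') :
    HasTemperateTimeDeriv (fun t x => U t x + V t x) (fun t x => U' t x + V' t x) := by
  obtain ⟨k, hk⟩ := hU.exists_order
  obtain ⟨l, hl⟩ := hV.exists_order
  have hkl := le_max_left k l
  have hlk := le_max_right k l
  exact ⟨fun t => (hU.temperate t).add (hV.temperate t),
    fun t => (hU.temperate_deriv t).add (hV.temperate_deriv t), max k l,
    fun t x => (hk.hasDerivAt t x).add (hl.hasDerivAt t x),
    (hk.growth.mono hkl).add (hl.growth.mono hlk),
    (hk.growth_deriv.mono hkl).add (hl.growth_deriv.mono hlk)⟩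

namespace HasRapidTimeDeriv

variable {φ φ' : ℝ → 𝓢(E, F)}

theorem bilin_static {G H : Type*} [NormedAddCommGroup G] [NormedSpace ℝ G]
    [NormedAddCommGroup H] [NormedSpace ℝ H] (hφ : HasRapidTimeDeriv φ φ')
    (B : F →L[ℝ] G →L[ℝ] H) {u : E → G} (hu : u.HasTemperateGrowth) :
    HasRapidTimeDeriv (fun t => bilinLeftCLM B hu (φ t)) (fun t => bilinLeftCLM B hu (φ' t)) := by
  obtain ⟨l, hl⟩ := exists_hasTimeDerivOfOrder_static hu
  intro k
  have h := (hφ (k - l)).bilin B hl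
  simp only [sub_add_cancel, map_zero, zero_add] at h
  exact h

theorem I_smul {φ φ' : ℝ → 𝓢(E, ℂ)} (hφ : HasRapidTimeDeriv φ φ') :
    HasRapidTimeDeriv (fun t => I • φ t) (fun t => I • φ' t) :=
  hφ.bilin_static (ContinuousLinearMap.mul ℝ ℂ).flip (.const I)

theorem smulLeftCLM {U U' : ℝ → E → ℝ} (hφ : HasRapidTimeDeriv φ φ')
    (hU : HasTemperateTimeDeriv U U') :
    HasRapidTimeDeriv (fun t => smulLeftCLM F (U t) (φ t))
      (fun t => smulLeftCLM F (U t) (φ' t) + smulLeftCLM F (U' t) (φ t)) := by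
  obtain ⟨l, hl⟩ := hU.exists_order
  intro k
  have h := hl.bilin (ContinuousLinearMap.lsmul ℝ ℝ) (hφ (k - l))
  rw [add_sub_cancel] at h
  simpa [hU.temperate, hU.temperate_deriv, smulLeftCLM_apply, Pi.add_def] using h

theorem eulerOp (hφ : HasRapidTimeDeriv (fun t => fderivCLM ℝ E F (φ t))
      (fun t => fderivCLM ℝ E F (φ' t))) :
    HasRapidTimeDeriv (fun t => eulerOp (φ t)) (fun t => eulerOp (φ' t)) :=
  hφ.bilin_static (.id ℝ (E →L[ℝ] F)) .id'

theorem lineDerivOp (hφ : HasRapidTimeDeriv (fun t => fderivCLM ℝ E F (φ t))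
      (fun t => fderivCLM ℝ E F (φ' t))) (v : E) :
    HasRapidTimeDeriv (fun t => ∂_{v} (φ t)) (fun t => ∂_{v} (φ' t)) :=
  hφ.bilin_static (.id ℝ (E →L[ℝ] F)) (.const v)

theorem hasDerivAt_l2Inner {E F : Type*} [NormedAddCommGroup E]
    [InnerProductSpace ℝ E] [FiniteDimensional ℝ E] [MeasurableSpace E] [BorelSpace E]
    [NormedAddCommGroup F] [InnerProductSpace ℝ F] {φ φ' χ χ' : ℝ → 𝓢(E, F)}
    (hφ : HasRapidTimeDeriv φ φ') (hχ : HasRapidTimeDeriv χ χ') (t : ℝ) :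
    HasDerivAt (fun s => l2Inner (φ s) (χ s)) (l2Inner (φ t) (χ' t) + l2Inner (φ' t) (χ t)) t := by
  have h := ((hφ 0).bilin (innerSL ℝ) (hχ (-(finrank ℝ E : ℤ) - 1))).hasDerivAt_integral volume
    (by omega) t
  exact h.congr_deriv (integral_add (pairing (innerSL ℝ) (φ t) (χ' t)).integrable
    (pairing (innerSL ℝ) (φ' t) (χ t)).integrable)

end HasRapidTimeDeriv

end SchwartzCurves

section SchrodingerCurve

variable {E : Type*} [NormedAddCommGroup E] [InnerProductSpace ℝ E]
  [FiniteDimensional ℝ E] [MeasurableSpace E] [BorelSpace E]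

/-- A Schwartz solution `φ` of `i∂ₜφ = -Δφ + Uφ`, with `φ'` as time derivative, the rapid decay
being locally uniform in time for `φ` and its gradient. -/
structure IsSchrodingerCurve (U : ℝ → E → ℝ) (φ φ' : ℝ → 𝓢(E, ℂ)) : Prop where
  rapid : HasRapidTimeDeriv φ φ'
  rapid_fderiv : HasRapidTimeDeriv (fun t => fderivCLM ℝ E ℂ (φ t))
    (fun t => fderivCLM ℝ E ℂ (φ' t))
  equation (t : ℝ) : I • φ' t = -Δ (φ t) + smulLeftCLM ℂ (U t) (φ t)

namespace IsSchrodingerCurve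

variable {U U' : ℝ → E → ℝ} {φ φ' : ℝ → 𝓢(E, ℂ)}

theorem hasDerivAt_variance (h : IsSchrodingerCurve U φ φ') (t : ℝ)
    (hU : (U t).HasTemperateGrowth) :
    HasDerivAt (fun s => l2Inner (smulLeftCLM ℂ (fun x => ‖x‖ ^ 2) (φ s)) (φ s))
      (4 * l2Inner (I • φ t) (eulerOp (φ t))) t := by
  have hsq := hasTemperateGrowth_norm_sq E
  refine ((h.rapid.smulLeftCLM (.static hsq)).hasDerivAt_l2Inner h.rapid t).congr_deriv ?_
  have hvar := variance_identity hU (h.equation t)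
  have hcomm : l2Inner (smulLeftCLM ℂ (fun x => ‖x‖ ^ 2) (φ' t)) (φ t) =
      l2Inner (smulLeftCLM ℂ (fun x => ‖x‖ ^ 2) (φ t)) (φ' t) := by
    rw [← l2Inner_smulLeftCLM hsq, l2Inner_comm]
  simp only [smulLeftCLM_const, zero_smul, zero_apply, add_zero]
  linear_combination 2 * hvar + hcomm

theorem hasDerivAt_virial (h : IsSchrodingerCurve U φ φ') (t : ℝ)
    (hU : (U t).HasTemperateGrowth) :
    HasDerivAt (fun s => l2Inner (I • φ s) (eulerOp (φ s)))
      (-2 * l2Inner (φ t) (Δ (φ t))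
        - l2Inner (smulLeftCLM ℂ (fun x => fderiv ℝ (U t) x x) (φ t)) (φ t)) t := by
  refine ((h.rapid.I_smul).hasDerivAt_l2Inner (.eulerOp h.rapid_fderiv) t).congr_deriv ?_
  rw [add_comm, virial_identity hU (h.equation t)]

theorem hasDerivAt_kinetic (h : IsSchrodingerCurve U φ φ') (t : ℝ) :
    HasDerivAt (fun s => -l2Inner (φ s) (Δ (φ s))) (-2 * l2Inner (φ' t) (Δ (φ t))) t := by
  let b := stdOrthonormalBasis ℝ E
  have hsum := HasDerivAt.fun_sum (u := Finset.univ) fun i _ =>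
    (HasRapidTimeDeriv.lineDerivOp h.rapid_fderiv (b i)).hasDerivAt_l2Inner
      (.lineDerivOp h.rapid_fderiv (b i)) t
  simp only [l2Inner_laplacian_eq_neg_sum b, neg_neg]
  refine hsum.congr_deriv ?_
  rw [neg_mul_neg, Finset.mul_sum]
  exact Finset.sum_congr rfl fun i _ => by rw [l2Inner_comm (∂_{b i} (φ t))]; ring

theorem hasDerivAt_energy (h : IsSchrodingerCurve U φ φ') (hU : HasTemperateTimeDeriv U U')
    (t : ℝ) :
    HasDerivAt (fun s => -l2Inner (φ s) (Δ (φ s)) + l2Inner (smulLeftCLM ℂ (U s) (φ s)) (φ s))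
      (l2Inner (smulLeftCLM ℂ (U' t) (φ t)) (φ t)) t := by
  have hpot := (h.rapid.smulLeftCLM hU).hasDerivAt_l2Inner h.rapid t
  refine ((h.hasDerivAt_kinetic t).add hpot).congr_deriv ?_
  have henergy := energy_identity (h.equation t)
  have hcomm : l2Inner (smulLeftCLM ℂ (U t) (φ' t)) (φ t) =
      l2Inner (φ' t) (smulLeftCLM ℂ (U t) (φ t)) := (l2Inner_smulLeftCLM (hU.temperate t) _ _).symm
  rw [map_neg] at henergy
  rw [map_add, LinearMap.add_apply, hcomm, l2Inner_comm _ (φ' t)]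
  linear_combination 2 * henergy

end IsSchrodingerCurve

end SchrodingerCurve

section Conformal

variable {ι E : Type*} [Fintype ι] [NormedAddCommGroup E] [InnerProductSpace ℝ E]
  [FiniteDimensional ℝ E] [MeasurableSpace E] [BorelSpace E]

/-- The component of `x - 2pt` in the direction `v`, where `p = -i∇`. -/
def conformalOp (t : ℝ) (v : E) (φ : 𝓢(E, ℂ)) : 𝓢(E, ℂ) :=
  smulLeftCLM ℂ (fun x => ⟪v, x⟫_ℝ) φ + (2 * t) • I • ∂_{v} φ

theorem sum_l2Inner_smulLeftCLM_inner (b : OrthonormalBasis ι ℝ E) (φ : 𝓢(E, ℂ)) :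
    ∑ i, l2Inner (smulLeftCLM ℂ (fun x => ⟪b i, x⟫_ℝ) φ) (smulLeftCLM ℂ (fun x => ⟪b i, x⟫_ℝ) φ) =
      l2Inner (smulLeftCLM ℂ (fun x => ‖x‖ ^ 2) φ) φ := by
  have hcoord (i) : (fun x => ⟪b i, x⟫_ℝ).HasTemperateGrowth := hasTemperateGrowth_inner_right (b i)
  have hsum : (fun x => ‖x‖ ^ 2) =
      fun x => ∑ i, ((fun y => ⟪b i, y⟫_ℝ) * fun y => ⟪b i, y⟫_ℝ) x := by
    ext x
    simp [← b.sum_sq_inner_right x, sq]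
  simp_rw [l2Inner_smulLeftCLM (hcoord _), smulLeftCLM_smulLeftCLM_apply (hcoord _) (hcoord _)]
  rw [hsum, smulLeftCLM_sum fun i _ => (hcoord i).mul (hcoord i)]
  simp

theorem l2Inner_conformalOp (t : ℝ) (v : E) (φ : 𝓢(E, ℂ)) :
    l2Inner (conformalOp t v φ) (conformalOp t v φ) =
      l2Inner (smulLeftCLM ℂ (fun x => ⟪v, x⟫_ℝ) φ) (smulLeftCLM ℂ (fun x => ⟪v, x⟫_ℝ) φ)
        - 4 * t * l2Inner (I • φ) (smulLeftCLM ℂ (fun x => ⟪v, x⟫_ℝ) (∂_{v} φ))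
        + 4 * t ^ 2 * l2Inner (∂_{v} φ) (∂_{v} φ) := by
  have hcoord : (fun x => ⟪v, x⟫_ℝ).HasTemperateGrowth := hasTemperateGrowth_inner_right v
  have hcross : l2Inner (smulLeftCLM ℂ (fun x => ⟪v, x⟫_ℝ) φ) (I • ∂_{v} φ) =
      -l2Inner (I • φ) (smulLeftCLM ℂ (fun x => ⟪v, x⟫_ℝ) (∂_{v} φ)) := by
    rw [l2Inner_smulLeftCLM hcoord, smulLeftCLM_I_smul hcoord, l2Inner_I_smul_left, neg_neg]
  have hgrad : l2Inner (I • ∂_{v} φ) (I • ∂_{v} φ) = l2Inner (∂_{v} φ) (∂_{v} φ) := by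
    rw [l2Inner_I_smul_left, smul_smul, I_mul_I, neg_one_smul, map_neg, neg_neg]
  simp only [conformalOp, map_add, map_smul, LinearMap.add_apply, LinearMap.smul_apply,
    smul_eq_mul, hgrad, hcross, l2Inner_comm (I • ∂_{v} φ) (smulLeftCLM ℂ _ φ)]
  ring

theorem sum_l2Inner_conformalOp (b : OrthonormalBasis ι ℝ E) (t : ℝ) (φ : 𝓢(E, ℂ)) :
    ∑ i, l2Inner (conformalOp t (b i) φ) (conformalOp t (b i) φ) =
      l2Inner (smulLeftCLM ℂ (fun x => ‖x‖ ^ 2) φ) φ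
        - 4 * t * l2Inner (I • φ) (eulerOp φ) - 4 * t ^ 2 * l2Inner φ (Δ φ) := by
  simp_rw [l2Inner_conformalOp, Finset.sum_add_distrib, Finset.sum_sub_distrib, ← Finset.mul_sum,
    sum_l2Inner_smulLeftCLM_inner, eulerOp_eq_sum b, map_sum, l2Inner_laplacian_eq_neg_sum b]
  ring

theorem IsSchrodingerCurve.hasDerivAt_conformal {U U' : ℝ → E → ℝ} {φ φ' : ℝ → 𝓢(E, ℂ)}
    (h : IsSchrodingerCurve U φ φ') (hU : HasTemperateTimeDeriv U U')
    (b : OrthonormalBasis ι ℝ E) {t : ℝ} (ht : t ≠ 0) :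
    HasDerivAt
      (fun s => 1 / s * (∑ i, l2Inner (conformalOp s (b i) (φ s)) (conformalOp s (b i) (φ s)))
        + 4 * s * l2Inner (smulLeftCLM ℂ (U s) (φ s)) (φ s))
      (-(1 / t ^ 2) * (∑ i, l2Inner (conformalOp t (b i) (φ t)) (conformalOp t (b i) (φ t)))
        + 4 * l2Inner (smulLeftCLM ℂ (fun x => fderiv ℝ (U t) x x) (φ t)) (φ t)
        + 4 * l2Inner (smulLeftCLM ℂ (U t) (φ t)) (φ t)
        + 4 * t * l2Inner (smulLeftCLM ℂ (U' t) (φ t)) (φ t)) t := by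
  have hvar := h.hasDerivAt_variance t (hU.temperate t)
  have hvir := h.hasDerivAt_virial t (hU.temperate t)
  have hen := h.hasDerivAt_energy hU t
  have hinv : HasDerivAt (fun s : ℝ => 1 / s) (-(1 / t ^ 2)) t := by
    simpa using hasDerivAt_inv ht
  have hid : HasDerivAt (fun s : ℝ => 4 * s) 4 t := by
    simpa using (hasDerivAt_id t).const_mul 4
  have hmain := ((hinv.mul hvar).sub (hvir.const_mul 4)).add (hid.mul hen)
  simp only [sum_l2Inner_conformalOp b]
  refine (hmain.congr_of_eventuallyEq ?_).congr_deriv ?_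
  · filter_upwards [eventually_ne_nhds ht] with s hs
    simp only [Pi.add_apply, Pi.sub_apply, Pi.mul_apply]
    field_simp
    ring
  · field_simp
    ring

end Conformal

section EuclideanSpace

variable {n : ℕ}

theorem pd_eq_lineDerivOp (φ : 𝓢(EuclideanSpace ℝ (Fin n), ℂ)) (i : Fin n)
    (x : EuclideanSpace ℝ (Fin n)) :
    pd φ i x = (∂_{EuclideanSpace.basisFun (Fin n) ℝ i} φ) x := by
  rw [lineDerivOp_apply_eq_fderiv, EuclideanSpace.basisFun_apply, pd]

theorem lap_eq_laplacian (φ : 𝓢(EuclideanSpace ℝ (Fin n), ℂ)) (x : EuclideanSpace ℝ (Fin n)) :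
    lap φ x = Δ φ x := by
  simp only [lap, pd_eq_lineDerivOp,
    laplacian_eq_sum (EuclideanSpace.basisFun (Fin n) ℝ), sum_apply]

theorem xdotGrad_eq_fderiv (V : EuclideanSpace ℝ (Fin n) → ℝ) (x : EuclideanSpace ℝ (Fin n)) :
    xdotGrad V x = fderiv ℝ V x x := by
  have h := congr_arg (fderiv ℝ V x) ((EuclideanSpace.basisFun (Fin n) ℝ).sum_repr x)
  simpa [xdotGrad] using h

theorem integral_xdotGrad_add_mul_norm_sq {u : EuclideanSpace ℝ (Fin n) → ℝ}
    (hu : u.HasTemperateGrowth) (φ : 𝓢(EuclideanSpace ℝ (Fin n), ℂ)) :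
    ∫ x, (xdotGrad u x + u x) * ‖φ x‖ ^ 2 =
      l2Inner (smulLeftCLM ℂ (fun x => fderiv ℝ u x x) φ) φ + ∫ x, u x * ‖φ x‖ ^ 2 := by
  have hux := hasTemperateGrowth_fderiv_apply_self hu
  simp_rw [l2Inner_smulLeftCLM_self hux, xdotGrad_eq_fderiv, add_mul]
  exact integral_add (integrable_mul_norm_sq hux φ) (integrable_mul_norm_sq hu φ)

theorem integral_xdotGrad_add_mul_norm_sq_add {u v : EuclideanSpace ℝ (Fin n) → ℝ}
    (hu : u.HasTemperateGrowth) (hv : v.HasTemperateGrowth)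
    (φ : 𝓢(EuclideanSpace ℝ (Fin n), ℂ)) :
    ∫ x, (xdotGrad (fun y => u y + v y) x + (u x + v x)) * ‖φ x‖ ^ 2 =
      (∫ x, (xdotGrad u x + u x) * ‖φ x‖ ^ 2) + ∫ x, (xdotGrad v x + v x) * ‖φ x‖ ^ 2 := by
  have hdiff {w : EuclideanSpace ℝ (Fin n) → ℝ} (hw : w.HasTemperateGrowth) :
      Differentiable ℝ w := hw.1.differentiable (by simp)
  have hgrowth {w : EuclideanSpace ℝ (Fin n) → ℝ} (hw : w.HasTemperateGrowth) :
      (fun x => fderiv ℝ w x x + w x).HasTemperateGrowth :=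
    (hasTemperateGrowth_fderiv_apply_self hw).add hw
  have hfderiv (x) : fderiv ℝ (fun y => u y + v y) x x = fderiv ℝ u x x + fderiv ℝ v x x := by
    rw [fderiv_fun_add (hdiff hu x) (hdiff hv x), add_apply]
  simp_rw [xdotGrad_eq_fderiv, hfderiv]
  rw [← integral_add (integrable_mul_norm_sq (hgrowth hu) φ)
    (integrable_mul_norm_sq (hgrowth hv) φ)]
  congr with x
  ring

theorem conformalFactor_eq_sum (φ : ℝ → 𝓢(EuclideanSpace ℝ (Fin n), ℂ)) (t : ℝ) :
    conformalFactor (fun s => φ s) t = ∑ i,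
      l2Inner (conformalOp t (EuclideanSpace.basisFun (Fin n) ℝ i) (φ t))
        (conformalOp t (EuclideanSpace.basisFun (Fin n) ℝ i) (φ t)) := by
  have hint (f : 𝓢(EuclideanSpace ℝ (Fin n), ℂ)) : Integrable fun x => ‖f x‖ ^ 2 :=
    (f.memLp 2).integrable_norm_pow (by simp)
  simp_rw [l2Inner_self, ← integral_finsetSum _ fun _ _ => hint _, conformalFactor]
  congr! 5 with x i
  have hcoord : ⟪EuclideanSpace.basisFun (Fin n) ℝ i, x⟫_ℝ = x i := by
    simp [EuclideanSpace.inner_single_left]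
  rw [pd_eq_lineDerivOp, conformalOp, add_apply,
    smulLeftCLM_apply_apply (hasTemperateGrowth_inner_right _), hcoord]
  simp [mul_assoc, mul_left_comm I]

theorem IsSchrodingerCurve.hasDerivAt_conformalFactor {V : EuclideanSpace ℝ (Fin n) → ℝ}
    {W W' : ℝ → EuclideanSpace ℝ (Fin n) → ℝ} {φ φ' : ℝ → 𝓢(EuclideanSpace ℝ (Fin n), ℂ)}
    (h : IsSchrodingerCurve (fun t x => V x + W t x) φ φ') (hV : V.HasTemperateGrowth)
    (hW : HasTemperateTimeDeriv W W') {t : ℝ} (ht : t ≠ 0) :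
    HasDerivAt
      (fun s => 1 / s * conformalFactor (fun s => φ s) s
        + 4 * s * ∫ x, (V x + W s x) * ‖φ s x‖ ^ 2)
      (-(1 / t ^ 2) * conformalFactor (fun s => φ s) t
        + 4 * (∫ x, (xdotGrad V x + V x) * ‖φ t x‖ ^ 2)
        + 4 * (∫ x, (xdotGrad (W t) x + W t x) * ‖φ t x‖ ^ 2)
        + 4 * t * ∫ x, W' t x * ‖φ t x‖ ^ 2) t := by
  have hU : HasTemperateTimeDeriv (fun t x => V x + W t x) W' := by
    simpa using (HasTemperateTimeDeriv.static hV).add hW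
  have hmain := h.hasDerivAt_conformal hU (EuclideanSpace.basisFun (Fin n) ℝ) ht
  simp only [← conformalFactor_eq_sum, l2Inner_smulLeftCLM_self (hU.temperate _),
    l2Inner_smulLeftCLM_self (hU.temperate_deriv _)] at hmain
  refine hmain.congr_deriv ?_
  linear_combination 4 * integral_xdotGrad_add_mul_norm_sq_add hV (hW.temperate t) (φ t)
    - 4 * integral_xdotGrad_add_mul_norm_sq (hU.temperate t) (φ t)

namespace LocUnifSchwartz

variable {ψ : ℝ → EuclideanSpace ℝ (Fin n) → ℂ}

/-- The slices of a locally uniformly Schwartz family, as bundled Schwartz functions. -/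
def toSchwartz (hS : LocUnifSchwartz ψ) (hψ : ∀ t, ContDiff ℝ (⊤ : ℕ∞) (ψ t)) (t : ℝ) :
    𝓢(EuclideanSpace ℝ (Fin n), ℂ) where
  toFun := ψ t
  smooth' := hψ t
  decay' k m := (hS k m |t|).imp fun _ hC => hC t (abs_le.mp le_rfl)

theorem locUnifGrowth (hS : LocUnifSchwartz ψ) (hψ : ∀ t, ContDiff ℝ (⊤ : ℕ∞) (ψ t)) (k : ℤ) :
    LocUnifGrowth k fun t => ⇑(hS.toSchwartz hψ t) :=
  .of_pow_mul_le (fun t => (hψ t).continuous) (fun m T => by simpa using hS m 0 T) k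

theorem locUnifGrowth_fderiv (hS : LocUnifSchwartz ψ) (hψ : ∀ t, ContDiff ℝ (⊤ : ℕ∞) (ψ t))
    (k : ℤ) : LocUnifGrowth k fun t => ⇑(fderivCLM ℝ _ ℂ (hS.toSchwartz hψ t)) :=
  .of_pow_mul_le (fun t => (hψ t).continuous_fderiv (by simp))
    (fun m T => by simpa [norm_iteratedFDeriv_one] using hS m 1 T) k

theorem isSchrodingerCurve {U : ℝ → EuclideanSpace ℝ (Fin n) → ℝ}
    (hU : ∀ t, (U t).HasTemperateGrowth)
    (hψ : ContDiff ℝ (⊤ : ℕ∞) (fun p : ℝ × EuclideanSpace ℝ (Fin n) => ψ p.1 p.2))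
    (hS : LocUnifSchwartz ψ) (hS' : LocUnifSchwartz (fun t => tderiv ψ t))
    (heq : ∀ t x, I * tderiv ψ t x = -lap (ψ t) x + U t x * ψ t x) :
    IsSchrodingerCurve U (hS.toSchwartz fun t => hψ.comp (contDiff_prodMk_right t))
      (hS'.toSchwartz fun t => contDiff_deriv_slice hψ t) where
  rapid k :=
    { hasDerivAt := fun t x =>
        (hasDerivAt_slice (hψ.differentiable (by simp)) t x).differentiableAt.hasDerivAt
      growth := hS.locUnifGrowth _ k
      growth_deriv := hS'.locUnifGrowth _ k }
  rapid_fderiv k :=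
    { hasDerivAt := hasDerivAt_fderiv_slice (contDiff_infty.mp hψ 2)
      growth := hS.locUnifGrowth_fderiv _ k
      growth_deriv := hS'.locUnifGrowth_fderiv _ k }
  equation t := by
    ext x
    rw [add_apply, neg_apply, ← lap_eq_laplacian, smulLeftCLM_apply_apply (hU t)]
    exact heq t x

end LocUnifSchwartz

end EuclideanSpace

theorem adapted_conformal_identity_scaled_general {n : ℕ}
    {V : EuclideanSpace ℝ (Fin n) → ℝ} (hV : V.HasTemperateGrowth)
    {W : ℝ → EuclideanSpace ℝ (Fin n) → ℝ}
    (hW : (fun p : ℝ × EuclideanSpace ℝ (Fin n) => W p.1 p.2).HasTemperateGrowth)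
    {ψ : ℝ → EuclideanSpace ℝ (Fin n) → ℂ}
    (hψ : ContDiff ℝ (⊤ : ℕ∞) (fun p : ℝ × EuclideanSpace ℝ (Fin n) => ψ p.1 p.2))
    (hS : LocUnifSchwartz ψ) (hS' : LocUnifSchwartz (fun t => tderiv ψ t))
    (heq : ∀ t x, I * tderiv ψ t x = -lap (ψ t) x + (V x : ℂ) * ψ t x + (W t x : ℂ) * ψ t x)
    {t : ℝ} (ht : t ≠ 0) :
    HasDerivAt (fun s => (1 / s) * conformalFactor ψ s
        + 4 * s * ∫ x : EuclideanSpace ℝ (Fin n), (V x + W s x) * ‖ψ s x‖ ^ 2)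
      (-(1 / t ^ 2) * conformalFactor ψ t
        + 4 * (∫ x : EuclideanSpace ℝ (Fin n), (xdotGrad V x + V x) * ‖ψ t x‖ ^ 2)
        + 4 * (∫ x : EuclideanSpace ℝ (Fin n), (xdotGrad (W t) x + W t x) * ‖ψ t x‖ ^ 2)
        + 4 * t * ∫ x : EuclideanSpace ℝ (Fin n),
            deriv (fun s => W s x) t * ‖ψ t x‖ ^ 2) t := by
  have hWt := HasTemperateTimeDeriv.of_uncurry hW
  have hcurve := hS.isSchrodingerCurve (U := fun t x => V x + W t x)
    (fun t => hV.add (hWt.temperate t)) hψ hS' fun t x => by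
      rw [heq, ofReal_add, add_mul, add_assoc]
  exact hcurve.hasDerivAt_conformalFactor hV hWt ht

/-- The adapted conformal identity for `H(t) = −Δ + V(x) + W(x,t)` (before the
adaptor): for `t > 0`, the derivative of
`(1/t)‖(x−2pt)ψ(t)‖² + 4t∫(V+W)|ψ|²` equals
`−(1/t²)‖(x−2pt)ψ(t)‖² + 4∫(x·∇V+V)|ψ|² + 4∫(x·∇ₓW+W)|ψ|² + 4t∫∂ₜW|ψ|²`. -/
theorem adapted_conformal_identity_scaled {n : ℕ} (hn : 1 ≤ n)
    (V : EuclideanSpace ℝ (Fin n) → ℝ) (hV : ContDiff ℝ (⊤ : ℕ∞) V)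
    (hVbd : ∀ m : ℕ, ∃ C : ℝ, ∀ x, ‖iteratedFDeriv ℝ m V x‖ ≤ C)
    (W : ℝ → EuclideanSpace ℝ (Fin n) → ℝ)
    (hW : ContDiff ℝ (⊤ : ℕ∞) (fun p : ℝ × EuclideanSpace ℝ (Fin n) => W p.1 p.2))
    (hWbd : ∀ m : ℕ, ∃ C : ℝ, ∀ p : ℝ × EuclideanSpace ℝ (Fin n),
      ‖iteratedFDeriv ℝ m (fun q : ℝ × EuclideanSpace ℝ (Fin n) => W q.1 q.2) p‖ ≤ C)
    (ψ : ℝ → EuclideanSpace ℝ (Fin n) → ℂ)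
    (hψ : ContDiff ℝ (⊤ : ℕ∞) (fun p : ℝ × EuclideanSpace ℝ (Fin n) => ψ p.1 p.2))
    (hS : LocUnifSchwartz ψ)
    (hS' : LocUnifSchwartz (fun t => tderiv ψ t))
    (heq : ∀ t x, Complex.I * tderiv ψ t x
      = -lap (ψ t) x + (V x : ℂ) * ψ t x + (W t x : ℂ) * ψ t x) :
    ∀ t : ℝ, 0 < t →
      HasDerivAt (fun s => (1 / s) * conformalFactor ψ s
          + 4 * s * ∫ x : EuclideanSpace ℝ (Fin n), (V x + W s x) * ‖ψ s x‖ ^ 2)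
        (-(1 / t ^ 2) * conformalFactor ψ t
          + 4 * (∫ x : EuclideanSpace ℝ (Fin n), (xdotGrad V x + V x) * ‖ψ t x‖ ^ 2)
          + 4 * (∫ x : EuclideanSpace ℝ (Fin n), (xdotGrad (W t) x + W t x) * ‖ψ t x‖ ^ 2)
          + 4 * t * ∫ x : EuclideanSpace ℝ (Fin n),
              deriv (fun s => W s x) t * ‖ψ t x‖ ^ 2) t := by
  have hVgrowth : V.HasTemperateGrowth := ⟨hV, fun m => ⟨0, by simpa using hVbd m⟩⟩
  have hWgrowth : (fun p : ℝ × EuclideanSpace ℝ (Fin n) => W p.1 p.2).HasTemperateGrowth :=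
    ⟨hW, fun m => ⟨0, by simpa using hWbd m⟩⟩
  exact fun t ht =>
    adapted_conformal_identity_scaled_general hVgrowth hWgrowth hψ hS hS' heq ht.ne'

end
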